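/- Let p ≥ 3 be an odd integer and s ≥ 1 an integer, and set q = p·s + 1 and r = p·s + 2. Then the tuple (e₀, p′, q′, r′) = (−1, (p−1)/2, s, (s·(p−1)+2)/2) consists of integers satisfying 0 < p′ < p, 0 < q′ < q, 0 < r′ < r, and the Seifert relation holds: (−1)·p·q·r + ((p−1)/2)·q·r + p·s·r + p·q·((s·(p−1)+2)/2) = −1. -/

import Mathlib

/-- Seifert data of the Brieskorn sphere `Σ(p, ps+1, ps+2)` for `p ≥ 3` odd and `s ≥ 1`. -/
theorem seifert_data_brieskorn_plus (p s : ℤ) (hp : 3 ≤ p) (hodd : Odd p) (hs : 1 ≤ s) :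
    let q := p * s + 1
    let r := p * s + 2
    let p' := (p - 1) / 2
    let q' := s
    let r' := (s * (p - 1) + 2) / 2
    2 * p' = p - 1 ∧ 2 * r' = s * (p - 1) + 2 ∧
    0 < p' ∧ p' < p ∧ 0 < q' ∧ q' < q ∧ 0 < r' ∧ r' < r ∧
    (-1) * p * q * r + p' * q * r + p * q' * r + p * q * r' = -1 := by
  -- Writing `p = 2k + 1` gives `p' = k` and `r' = s * k + 1`; the relation is then a
  -- polynomial identity in `k` and `s`.
  obtain ⟨k, rfl⟩ := hodd
  have h1 : (2 * k + 1 - 1) / 2 = k := by omega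
  have h2 : (s * (2 * k + 1 - 1) + 2) / 2 = s * k + 1 := by
    rw [show s * (2 * k + 1 - 1) + 2 = 2 * (s * k + 1) by ring]
    omega
  have hk : 1 ≤ k := by omega
  have hsk : 0 < s * k := by positivity
  dsimp only
  rw [h1, h2]
  refine ⟨by ring, by ring, by omega, by omega, by omega, ?_, by omega, ?_, by ring⟩ <;> nlinarith
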